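/- The spectrum of U(s,r,s) as a bounded operator on ℓ_p (1 < p < ∞) equals the segment [r − 2s, r + 2s] = {r + 2s·cos θ : θ ∈ [0, 2π]}. -/

import Mathlib

open scoped ENNReal
open Real Set

/-- The tridiagonal operator U(s,r,s) acting on sequences, with x_{-1} = 0. -/
noncomputable def Ufun (s r : ℂ) (x : ℕ → ℂ) : ℕ → ℂ :=
  fun k => (if k = 0 then 0 else s * x (k - 1)) + r * x k + s * x (k + 1)

open Filter Topology

section Shift

variable {p : ℝ≥0∞} [Fact (1 ≤ p)]

theorem toReal_pos_of_one_le (hp' : p ≠ ∞) : 0 < p.toReal :=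
  ENNReal.toReal_pos (zero_lt_one.trans_le Fact.out).ne' hp'

/-- The left shift on `ℓ_p`. -/
noncomputable def leftShift (hp' : p ≠ ∞) :
    lp (fun _ : ℕ => ℂ) p →L[ℂ] lp (fun _ : ℕ => ℂ) p :=
  LinearMap.mkContinuous
    { toFun := fun x => ⟨fun k => x (k + 1), memℓp_gen <|
        (summable_nat_add_iff 1).2 ((lp.memℓp x).summable (toReal_pos_of_one_le hp'))⟩
      map_add' := fun _ _ => rfl
      map_smul' := fun _ _ => rfl } 1 <| fun x => by
    have h0 := toReal_pos_of_one_le hp'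
    refine lp.norm_le_of_tsum_le h0 (by positivity) ?_
    rw [one_mul, lp.norm_rpow_eq_tsum h0,
      ((lp.memℓp x).summable h0).tsum_eq_zero_add]
    exact le_add_of_nonneg_left (by positivity)

theorem leftShift_apply (hp' : p ≠ ∞) (x : lp (fun _ : ℕ => ℂ) p) (k : ℕ) :
    leftShift hp' x k = x (k + 1) := rfl

theorem norm_leftShift_le (hp' : p ≠ ∞) : ‖leftShift hp'‖ ≤ 1 :=
  LinearMap.mkContinuous_norm_le _ zero_le_one _

theorem summable_norm_rightShift_rpow (hp' : p ≠ ∞) (x : lp (fun _ : ℕ => ℂ) p) :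
    Summable fun k : ℕ => ‖if k = 0 then 0 else x (k - 1)‖ ^ p.toReal :=
  (summable_nat_add_iff 1).1 <| by
    simpa using (lp.memℓp x).summable (toReal_pos_of_one_le hp')

/-- The right shift on `ℓ_p`. -/
noncomputable def rightShift (hp' : p ≠ ∞) :
    lp (fun _ : ℕ => ℂ) p →L[ℂ] lp (fun _ : ℕ => ℂ) p :=
  LinearMap.mkContinuous
    { toFun := fun x => ⟨fun k => if k = 0 then 0 else x (k - 1),
        memℓp_gen (summable_norm_rightShift_rpow hp' x)⟩
      map_add' := fun x y => by
        ext k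
        change (if k = 0 then (0 : ℂ) else x (k - 1) + y (k - 1)) =
          (if k = 0 then 0 else x (k - 1)) + (if k = 0 then 0 else y (k - 1))
        split_ifs <;> simp
      map_smul' := fun c x => by
        ext k
        by_cases hk : k = 0 <;> simp [hk] } 1 <| fun x => by
    have h0 := toReal_pos_of_one_le hp'
    refine lp.norm_le_of_tsum_le h0 (by positivity) ?_
    rw [one_mul, lp.norm_rpow_eq_tsum h0]
    refine (summable_norm_rightShift_rpow hp' x).tsum_eq_zero_add.trans_le ?_
    simp [h0.ne']

theorem rightShift_apply (hp' : p ≠ ∞) (x : lp (fun _ : ℕ => ℂ) p) (k : ℕ) :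
    rightShift hp' x k = if k = 0 then 0 else x (k - 1) := rfl

theorem norm_rightShift_le (hp' : p ≠ ∞) : ‖rightShift hp'‖ ≤ 1 :=
  LinearMap.mkContinuous_norm_le _ zero_le_one _

theorem isUnit_one_sub_smul {A : Type*} [NormedRing A] [NormedAlgebra ℂ A] [CompleteSpace A]
    {a : A} (ha : ‖a‖ ≤ 1) {z : ℂ} (hz : ‖z‖ < 1) : IsUnit (1 - z • a) :=
  isUnit_one_sub_of_norm_lt_one <| (norm_smul_le z a).trans_lt <|
    (mul_le_of_le_one_right (norm_nonneg z) ha).trans_lt hz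

theorem tendsto_coe_lp_atTop_zero (hp' : p ≠ ∞) (x : lp (fun _ : ℕ => ℂ) p) :
    Tendsto (fun k => x k) atTop (𝓝 0) := by
  have h0 := toReal_pos_of_one_le hp'
  have h := ((lp.memℓp x).summable h0).tendsto_atTop_zero.rpow_const
    (p := p.toReal⁻¹) (Or.inr (by positivity))
  rw [tendsto_zero_iff_norm_tendsto_zero]
  simpa [Real.zero_rpow (inv_ne_zero h0.ne'), Real.rpow_rpow_inv (norm_nonneg _) h0.ne'] using h

end Shift

theorem eq_zero_of_norm_succ_eq_of_tendsto_zero {y : ℕ → ℂ} (hy : ∀ k, ‖y (k + 1)‖ = ‖y k‖)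
    (h : Tendsto y atTop (𝓝 0)) (k : ℕ) : y k = 0 := by
  have hc : ∀ k, ‖y k‖ = ‖y 0‖ := fun k => by
    induction k with
    | zero => rfl
    | succ k ih => rw [hy, ih]
  have h' : Tendsto (fun _ : ℕ => ‖y 0‖) atTop (𝓝 0) := by
    simpa only [hc] using tendsto_zero_iff_norm_tendsto_zero.1 h
  rw [← norm_eq_zero, hc]
  exact tendsto_nhds_unique tendsto_const_nhds h'

/-- On the unit circle, the tridiagonal system with right-hand side supported at `0` has no
nonzero solution tending to zero, unless the right-hand side vanishes. -/
theorem eq_zero_of_tridiagonal {z w c : ℂ} (hzw : z * w = 1) (hz : ‖z‖ = 1) {x : ℕ → ℂ}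
    (hx : Tendsto x atTop (𝓝 0)) (h0 : (z + w) * x 0 - x 1 = c)
    (h : ∀ k, (z + w) * x (k + 1) - x k - x (k + 2) = 0) : c = 0 := by
  have hw : ‖w‖ = 1 := by simpa [hz] using congrArg norm hzw
  have hx1 : Tendsto (fun k => x (k + 1)) atTop (𝓝 0) := (tendsto_add_atTop_iff_nat 1).2 hx
  have hy : ∀ k, x (k + 1) - z * x k = 0 := by
    refine eq_zero_of_norm_succ_eq_of_tendsto_zero (fun k => ?_)
      (by simpa using hx1.sub (hx.const_mul z))
    have : x (k + 1 + 1) - z * x (k + 1) = w * (x (k + 1) - z * x k) := by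
      linear_combination x k * hzw - h k
    rw [this, norm_mul, hw, one_mul]
  have hx0 : ∀ k, x k = 0 := by
    refine eq_zero_of_norm_succ_eq_of_tendsto_zero (fun k => ?_) hx
    rw [sub_eq_zero.1 (hy k), norm_mul, hz, one_mul]
  simpa [hx0] using h0.symm

theorem exists_add_eq_mul_eq_one (m : ℂ) : ∃ z w : ℂ, z + w = m ∧ z * w = 1 ∧ ‖z‖ ≤ 1 := by
  obtain ⟨d, hd⟩ := IsAlgClosed.exists_pow_nat_eq (m ^ 2 - 4) two_pos
  have hmul : (m + d) / 2 * ((m - d) / 2) = 1 := by linear_combination -hd / 4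
  rcases le_total ‖(m + d) / 2‖ 1 with h | h
  · exact ⟨_, _, by ring, hmul, h⟩
  · refine ⟨(m - d) / 2, (m + d) / 2, by ring, by rw [mul_comm, hmul], ?_⟩
    have hn : ‖(m + d) / 2‖ * ‖(m - d) / 2‖ = 1 := by rw [← norm_mul, hmul, norm_one]
    nlinarith [norm_nonneg ((m - d) / 2)]

theorem exists_add_eq_two_mul_cos {z w : ℂ} (hzw : z * w = 1) (hz : ‖z‖ = 1) :
    ∃ θ ∈ Icc (0 : ℝ) (2 * π), z + w = 2 * Real.cos θ := by
  refine ⟨Real.arccos z.re, ⟨Real.arccos_nonneg _, ?_⟩, ?_⟩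
  · linarith [Real.arccos_le_pi z.re, Real.pi_pos]
  · have hre := abs_le.1 (hz ▸ Complex.abs_re_le_norm z)
    rw [Real.cos_arccos hre.1 hre.2, eq_inv_of_mul_eq_one_right hzw, Complex.inv_eq_conj hz,
      Complex.add_conj]
    push_cast
    rfl

/-- The spectrum of U(s,r,s) on ℓ_p equals the segment
[r − 2s, r + 2s] = {r + 2s cos θ : θ ∈ [0, 2π]}. -/
theorem stmt8 (r s : ℝ) (hs : s ≠ 0) (p : ℝ≥0∞) (hp : 1 < p) (hp' : p ≠ ∞) [Fact (1 ≤ p)]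
    (T : lp (fun _ : ℕ => ℂ) p →L[ℂ] lp (fun _ : ℕ => ℂ) p)
    (hT : ∀ (x : lp (fun _ : ℕ => ℂ) p) (k : ℕ),
      T x k = Ufun (s : ℂ) (r : ℂ) ↑x k) :
    spectrum ℂ T = {lam : ℂ | ∃ t ∈ Icc (-2 : ℝ) 2, lam = r + t * s} ∧
      spectrum ℂ T =
        {lam : ℂ | ∃ θ ∈ Icc (0 : ℝ) (2 * π), lam = r + 2 * s * Real.cos θ} := by
  have hs' : (s : ℂ) ≠ 0 := mod_cast hs
  have hsegment : {lam : ℂ | ∃ t ∈ Icc (-2 : ℝ) 2, lam = r + t * s} =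
      {lam : ℂ | ∃ θ ∈ Icc (0 : ℝ) (2 * π), lam = r + 2 * s * Real.cos θ} := by
    ext lam
    constructor
    · rintro ⟨t, ⟨h1, h2⟩, rfl⟩
      refine ⟨Real.arccos (t / 2), ⟨Real.arccos_nonneg _, ?_⟩, ?_⟩
      · linarith [Real.arccos_le_pi (t / 2), Real.pi_pos]
      · rw [Real.cos_arccos (by linarith) (by linarith)]
        push_cast
        ring
    · rintro ⟨θ, -, rfl⟩
      refine ⟨2 * Real.cos θ, ⟨?_, ?_⟩, ?_⟩
      · linarith [Real.neg_one_le_cos θ]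
      · linarith [Real.cos_le_one θ]
      · push_cast
        ring
  rw [hsegment, and_self]
  ext lam
  constructor
  · intro hlam
    obtain ⟨z, w, hadd, hzw, hz⟩ := exists_add_eq_mul_eq_one ((lam - r) / s)
    have hlam' : lam = r + s * (z + w) := by
      rw [hadd]
      field_simp
      ring
    rcases hz.lt_or_eq with hlt | heq
    · refine absurd ?_ hlam
      have hw : w ≠ 0 := right_ne_zero_of_mul_eq_one hzw
      have hfactor : algebraMap ℂ _ lam - T = (s * w) •
          ((1 - z • leftShift hp') * (1 - z • rightShift hp')) := by
        ext x k
        simp only [sub_apply, smul_apply, mul_apply_eq_comp, one_apply_eq_self,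
          ContinuousLinearMap.algebraMap_apply, lp.coeFn_sub, lp.coeFn_smul, Pi.sub_apply,
          Pi.smul_apply, smul_eq_mul, leftShift_apply, rightShift_apply, hT, Ufun, hlam']
        rcases k with _ | k
        · simp
          linear_combination (-s * z * x 0 + s * x 1) * hzw
        · simp
          linear_combination (-s * z * x (k + 1) + s * x (k + 2) + s * x k) * hzw
      rw [spectrum.mem_resolventSet_iff, hfactor]
      exact (((isUnit_one_sub_smul (norm_leftShift_le hp') hlt).mul
        (isUnit_one_sub_smul (norm_rightShift_le hp') hlt)).smul
          (Units.mk0 _ (mul_ne_zero hs' hw)))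
    · obtain ⟨θ, hθ, h⟩ := exists_add_eq_two_mul_cos hzw heq
      exact ⟨θ, hθ, by rw [hlam', h]; ring⟩
  · rintro ⟨θ, -, rfl⟩ hres
    obtain ⟨B, hB⟩ := (spectrum.mem_resolventSet_iff.1 hres).exists_right_inv
    set x := B (lp.single p 0 (s : ℂ)) with hx
    have hsol : ∀ k, (r + 2 * s * Real.cos θ) * x k - Ufun s r x k =
        lp.single (E := fun _ : ℕ => ℂ) p 0 (s : ℂ) k := fun k => by
      have := congrArg (fun A => A (lp.single p 0 (s : ℂ)) k) hB
      simpa only [mul_apply_eq_comp, one_apply_eq_self, sub_apply, ← hx,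
        ContinuousLinearMap.algebraMap_apply, lp.coeFn_sub, lp.coeFn_smul, Pi.sub_apply,
        Pi.smul_apply, smul_eq_mul, hT] using this
    have hcos : Complex.exp (θ * Complex.I) + Complex.exp (-θ * Complex.I) = 2 * Real.cos θ := by
      rw [Complex.ofReal_cos, Complex.two_cos]
    refine one_ne_zero (eq_zero_of_tridiagonal (z := Complex.exp (θ * Complex.I))
      (w := Complex.exp (-θ * Complex.I)) (c := 1) ?_ (Complex.norm_exp_ofReal_mul_I θ)
      (tendsto_coe_lp_atTop_zero hp' x) ?_ fun k => ?_)
    · rw [← Complex.exp_add]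
      simp
    · have := hsol 0
      simp only [Ufun, lp.single_apply_self, if_true] at this
      rw [hcos]
      refine mul_left_cancel₀ hs' ?_
      linear_combination this
    · have := hsol (k + 1)
      rw [lp.single_apply_ne _ _ _ k.succ_ne_zero] at this
      simp only [Ufun, if_neg k.succ_ne_zero, Nat.add_sub_cancel] at this
      rw [hcos]
      refine mul_left_cancel₀ hs' ?_
      linear_combination this
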